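/- arXiv:1802.04052 — 2 statements merged into one kernel-verified Lean document; each statement's English description precedes it below -/
import Mathlib

section
/- (Kato spectrum inclusion) Let λ ∈ ℂ and t > 0 with φ_λ(t) ≠ 0. If the bounded operator c_λ(t)·I − S(t) is Kato, i.e. its range is closed and N(c_λ(t)·I − S(t)) ⊆ R^∞(c_λ(t)·I − S(t)), then λ − A is Kato: the range of λ − A is closed in X and N(λ − A) ⊆ R^∞(λ − A). Consequently, if λ belongs to the Kato spectrum of A then ∫₀ᵗ e^{λ(t−s)} s^{α−1}/Γ(α) ds belongs to the Kato spectrum of S(t). -/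
/-!
Write `B = λ − A`, `T = c_λ(t) − S(t)`, `W = D_λ(t)`, `L = L_λ(t)`. Three identities carry the
proof: `B W = T` on `X`, `W B = T` on `D(A)`, and `B L + e^{−λt} W = φ_λ(t)` on `X`.

* Differentiating `r ↦ e^{−λr} S(r) u` for `u ∈ D(A)` gives `W B u = T u` (`Dop_sub`), and one more
  integration gives `L B u = φ u − e^{−λt} W u` (`Lop_sub`). Since `W` and `L` commute with a
  resolvent operator `R = (μ − A)⁻¹`, these identities on `D(A) = R(X)` turn into the corresponding
  identities with `B` on the left on all of `X` (`mem_and_eq_of_commute`).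
* Range of `B`: if `B xₙ → y` with `xₙ ∈ D(A)`, then `T xₙ = W B xₙ → W y`, so `W y = T z = B W z`
  for some `z`, and `φ y = B (L y + e^{−λt} W z)` lies in the range of `B`.
* Kernel of `B`: if `B x = 0`, then `T x = W B x = 0`, so `x = Tⁿ w = Bⁿ Wⁿ w`, because `T` and `W`
  commute.
-/

open MeasureTheory intervalIntegral Pointwise

noncomputable section

/-- `D_λ(t) x = ∫₀ᵗ e^{λ(t−r)} S(r) x dr`. -/
noncomputable def Dop {X : Type*} [NormedAddCommGroup X] [NormedSpace ℂ X]
    (S : ℝ → X →L[ℂ] X) (l : ℂ) (t : ℝ) (x : X) : X :=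
  ∫ r in (0:ℝ)..t, Complex.exp (l * ((t - r : ℝ) : ℂ)) • S r x

/-- `c_λ(t) = ∫₀ᵗ e^{λ(t−s)} s^{α−1}/Γ(α) ds`. -/
noncomputable def cConst (α : ℝ) (l : ℂ) (t : ℝ) : ℂ :=
  ∫ s in (0:ℝ)..t,
    Complex.exp (l * ((t - s : ℝ) : ℂ)) * ((s ^ (α - 1) : ℝ) : ℂ) / ((Real.Gamma α : ℝ) : ℂ)

/-- `L_λ(t) x = ∫₀ᵗ e^{−λs} D_λ(s) x ds`. -/
noncomputable def Lop {X : Type*} [NormedAddCommGroup X] [NormedSpace ℂ X]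
    (S : ℝ → X →L[ℂ] X) (l : ℂ) (t : ℝ) (x : X) : X :=
  ∫ s in (0:ℝ)..t, Complex.exp (-l * ((s : ℝ) : ℂ)) • Dop S l s x

/-- `φ_λ(t) = ∫₀ᵗ ∫₀^τ e^{−λr} r^{α−1}/Γ(α) dr dτ`. -/
noncomputable def phiConst (α : ℝ) (l : ℂ) (t : ℝ) : ℂ :=
  ∫ τ in (0:ℝ)..t, ∫ r in (0:ℝ)..τ,
    Complex.exp (-l * ((r : ℝ) : ℂ)) * ((r ^ (α - 1) : ℝ) : ℂ) / ((Real.Gamma α : ℝ) : ℂ)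

/-- Iterated domain `D(A^n)` of the (possibly unbounded) operator given by the map `f = λ − A`
with domain `D`: `D^0 = X`, `D^{n+1} = {x ∈ D | f x ∈ D^n}`. -/
def iterDom {X : Type*} (D : Set X) (f : X → X) : ℕ → Set X
  | 0 => Set.univ
  | n + 1 => {x | x ∈ D ∧ f x ∈ iterDom D f n}

/-- The bounded operator `c_λ(t)·I − S(t)`. -/
noncomputable def cSop {X : Type*} [NormedAddCommGroup X] [NormedSpace ℂ X]
    (S : ℝ → X →L[ℂ] X) (α : ℝ) (l : ℂ) (t : ℝ) : X →L[ℂ] X :=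
  cConst α l t • ContinuousLinearMap.id ℂ X - S t

/-- `D_{λ,n}(t) = Σ_{i=1}^n binom(n,i)·(φ_λ(t))^{n−i}·e^{−iλt}·(−D_λ(t))^{i−1}`. -/
noncomputable def Dln {X : Type*} [NormedAddCommGroup X] [NormedSpace ℂ X]
    (S : ℝ → X →L[ℂ] X) (α : ℝ) (l : ℂ) (t : ℝ) (n : ℕ) (x : X) : X :=
  ∑ i ∈ Finset.Icc 1 n,
    ((n.choose i : ℂ) * (phiConst α l t) ^ (n - i) * Complex.exp (-(i : ℂ) * l * (t : ℂ))) •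
      ((fun y => - Dop S l t y)^[i - 1] x)

section Aux

variable {X : Type*} [NormedAddCommGroup X] [NormedSpace ℂ X]

lemma uIcc_subset_Ici {t : ℝ} (ht : 0 ≤ t) : Set.uIcc 0 t ⊆ Set.Ici (0:ℝ) := by
  rw [Set.uIcc_of_le ht]; exact Set.Icc_subset_Ici_self

lemma exp_smul_integrable {S : ℝ → X →L[ℂ] X}
    (hcont : ∀ x : X, ContinuousOn (fun u : ℝ => S u x) (Set.Ici (0:ℝ)))
    (l : ℂ) {t : ℝ} (ht : 0 ≤ t) (x : X) :
    IntervalIntegrable (fun r : ℝ => Complex.exp (-l * (r : ℂ)) • S r x) volume 0 t := by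
  apply ContinuousOn.intervalIntegrable
  refine ContinuousOn.smul (Continuous.continuousOn (by fun_prop)) ?_
  exact (hcont x).mono (uIcc_subset_Ici ht)

lemma Dop_eq (S : ℝ → X →L[ℂ] X) (l : ℂ) (t : ℝ) (x : X) :
    Dop S l t x = Complex.exp (l * (t : ℂ)) •
      ∫ r in (0:ℝ)..t, Complex.exp (-l * (r : ℂ)) • S r x := by
  unfold Dop
  rw [← intervalIntegral.integral_smul]
  congr 1
  funext r
  rw [smul_smul, ← Complex.exp_add]
  congr 2
  push_cast; ring

lemma Lop_eq (S : ℝ → X →L[ℂ] X) (l : ℂ) (t : ℝ) (x : X) :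
    Lop S l t x = ∫ s in (0:ℝ)..t, ∫ r in (0:ℝ)..s, Complex.exp (-l * (r : ℂ)) • S r x := by
  unfold Lop
  congr 1
  funext s
  rw [Dop_eq, smul_smul, ← Complex.exp_add]
  simp

lemma cConst_eq (α : ℝ) (l : ℂ) (t : ℝ) :
    cConst α l t = Complex.exp (l * (t : ℂ)) *
      ∫ r in (0:ℝ)..t,
        Complex.exp (-l * (r : ℂ)) * ((r ^ (α - 1) : ℝ) : ℂ) / ((Real.Gamma α : ℝ) : ℂ) := by
  unfold cConst
  rw [← intervalIntegral.integral_const_mul]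
  congr 1
  funext r
  have : Complex.exp (l * ((t - r : ℝ) : ℂ)) =
      Complex.exp (l * (t : ℂ)) * Complex.exp (-l * (r : ℂ)) := by
    rw [← Complex.exp_add]; congr 1; push_cast; ring
  rw [this]; ring

lemma inner_integrable {S : ℝ → X →L[ℂ] X}
    (hcont : ∀ x : X, ContinuousOn (fun u : ℝ => S u x) (Set.Ici (0:ℝ)))
    (l : ℂ) {t : ℝ} (ht : 0 ≤ t) (x : X) :
    IntervalIntegrable
      (fun s : ℝ => ∫ r in (0:ℝ)..s, Complex.exp (-l * (r : ℂ)) • S r x) volume 0 t := by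
  apply ContinuousOn.intervalIntegrable
  exact intervalIntegral.continuousOn_primitive_interval
    ((intervalIntegrable_iff' (by simp)).1 (exp_smul_integrable hcont l ht x))

/-- `e^{-λr} r^{α-1}/Γ(α)` is integrable at `0` because `α > 0`. -/
lemma kernel_integrable {α : ℝ} (hα : 0 < α) (l : ℂ) (a t : ℝ) :
    IntervalIntegrable (fun r : ℝ =>
      Complex.exp (-l * (r : ℂ)) * ((r ^ (α - 1) : ℝ) : ℂ) / ((Real.Gamma α : ℝ) : ℂ))
      volume a t := by
  have h1 : IntervalIntegrable (fun r : ℝ => ((r ^ (α - 1) : ℝ) : ℂ)) volume a t := by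
    have h0 : IntervalIntegrable (fun r : ℝ => r ^ (α - 1)) volume a t :=
      intervalIntegral.intervalIntegrable_rpow' (by linarith)
    exact ⟨h0.1.ofReal, h0.2.ofReal⟩
  exact (h1.continuousOn_mul (Continuous.continuousOn (by fun_prop))).div_const _

lemma inner_lin {S : ℝ → X →L[ℂ] X}
    (hcont : ∀ x : X, ContinuousOn (fun u : ℝ => S u x) (Set.Ici (0:ℝ)))
    (l : ℂ) {t : ℝ} (ht : 0 ≤ t) (a : ℂ) (x y : X) :
    ∫ r in (0:ℝ)..t, Complex.exp (-l * (r : ℂ)) • S r (a • x + y) =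
      a • (∫ r in (0:ℝ)..t, Complex.exp (-l * (r : ℂ)) • S r x) +
        ∫ r in (0:ℝ)..t, Complex.exp (-l * (r : ℂ)) • S r y := by
  have hx : IntervalIntegrable (fun r : ℝ => a • Complex.exp (-l * (r : ℂ)) • S r x) volume 0 t :=
    (exp_smul_integrable hcont l ht x).smul a
  rw [← intervalIntegral.integral_smul,
    ← intervalIntegral.integral_add hx (exp_smul_integrable hcont l ht y)]
  congr 1
  funext r
  rw [map_add, map_smul, smul_add, smul_comm a]

lemma Dop_lin {S : ℝ → X →L[ℂ] X}
    (hcont : ∀ x : X, ContinuousOn (fun u : ℝ => S u x) (Set.Ici (0:ℝ)))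
    (l : ℂ) {t : ℝ} (ht : 0 ≤ t) (a : ℂ) (x y : X) :
    Dop S l t (a • x + y) = a • Dop S l t x + Dop S l t y := by
  rw [Dop_eq, Dop_eq, Dop_eq, smul_comm a, ← smul_add, inner_lin hcont l ht]

lemma Lop_lin {S : ℝ → X →L[ℂ] X}
    (hcont : ∀ x : X, ContinuousOn (fun u : ℝ => S u x) (Set.Ici (0:ℝ)))
    (l : ℂ) {t : ℝ} (ht : 0 ≤ t) (a : ℂ) (x y : X) :
    Lop S l t (a • x + y) = a • Lop S l t x + Lop S l t y := by
  have hx : IntervalIntegrable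
      (fun s : ℝ => a • ∫ r in (0:ℝ)..s, Complex.exp (-l * (r : ℂ)) • S r x) volume 0 t :=
    (inner_integrable hcont l ht x).smul a
  rw [Lop_eq, Lop_eq, Lop_eq, ← intervalIntegral.integral_smul,
    ← intervalIntegral.integral_add hx (inner_integrable hcont l ht y)]
  apply intervalIntegral.integral_congr
  intro s hs
  exact inner_lin hcont l (uIcc_subset_Ici ht hs) a x y

/-- An operator `F` commuting with the resolvent `R = (μ − A)⁻¹`, for which `F (λ − A) = G` on
`D(A)` with `G` commuting with `R`, maps `X` into `D(A)` and satisfies `(λ − A) F = G` on `X`. -/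
lemma mem_and_eq_of_commute {D : Submodule ℂ X} {A : X →ₗ[ℂ] X} {μ : ℂ} {R : X →L[ℂ] X}
    (hRD : ∀ x : X, R x ∈ D) (hAR : ∀ x : X, μ • R x - A (R x) = x) (l : ℂ)
    {F G : X → X} (hF : ∀ (a : ℂ) x y, F (a • x + y) = a • F x + F y)
    (hFR : ∀ x, R (F x) = F (R x)) (hGR : ∀ x, R (G x) = G (R x))
    (hFG : ∀ x ∈ D, F (l • x - A x) = G x) (x : X) :
    F x ∈ D ∧ l • F x - A (F x) = G x := by
  have h : F x = R (G x + (μ - l) • F x) := by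
    rw [map_add, map_smul, hFR, hGR, ← hFG _ (hRD x), add_comm, ← hF]
    congr 1
    nth_rewrite 1 [← hAR x]
    module
  refine ⟨h ▸ hRD _, ?_⟩
  have h2 := hAR (G x + (μ - l) • F x)
  rw [← h] at h2
  have h3 : l • F x - A (F x) = (μ • F x - A (F x)) - (μ - l) • F x := by module
  rw [h3, h2]
  simp

variable [CompleteSpace X]

lemma inner_comm {S : ℝ → X →L[ℂ] X}
    (hcont : ∀ x : X, ContinuousOn (fun u : ℝ => S u x) (Set.Ici (0:ℝ)))
    (R : X →L[ℂ] X) (hR : ∀ u : ℝ, 0 ≤ u → ∀ x, R (S u x) = S u (R x))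
    (l : ℂ) {t : ℝ} (ht : 0 ≤ t) (x : X) :
    R (∫ r in (0:ℝ)..t, Complex.exp (-l * (r : ℂ)) • S r x) =
      ∫ r in (0:ℝ)..t, Complex.exp (-l * (r : ℂ)) • S r (R x) := by
  rw [← ContinuousLinearMap.intervalIntegral_comp_comm _ (exp_smul_integrable hcont l ht x)]
  apply intervalIntegral.integral_congr
  intro r hr
  simp only [map_smul]
  rw [hR r (uIcc_subset_Ici ht hr)]

lemma Dop_comm {S : ℝ → X →L[ℂ] X}
    (hcont : ∀ x : X, ContinuousOn (fun u : ℝ => S u x) (Set.Ici (0:ℝ)))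
    (R : X →L[ℂ] X) (hR : ∀ u : ℝ, 0 ≤ u → ∀ x, R (S u x) = S u (R x))
    (l : ℂ) {t : ℝ} (ht : 0 ≤ t) (x : X) :
    R (Dop S l t x) = Dop S l t (R x) := by
  rw [Dop_eq, Dop_eq, map_smul, inner_comm hcont R hR l ht]

lemma Lop_comm {S : ℝ → X →L[ℂ] X}
    (hcont : ∀ x : X, ContinuousOn (fun u : ℝ => S u x) (Set.Ici (0:ℝ)))
    (R : X →L[ℂ] X) (hR : ∀ u : ℝ, 0 ≤ u → ∀ x, R (S u x) = S u (R x))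
    (l : ℂ) {t : ℝ} (ht : 0 ≤ t) (x : X) :
    R (Lop S l t x) = Lop S l t (R x) := by
  rw [Lop_eq, Lop_eq,
    ← ContinuousLinearMap.intervalIntegral_comp_comm _ (inner_integrable hcont l ht x)]
  apply intervalIntegral.integral_congr
  intro s hs
  exact inner_comm hcont R hR l (uIcc_subset_Ici ht hs) x

/-- `D_λ(t)` is bounded: the family `S(r)`, `0 ≤ r ≤ t`, is uniformly bounded by the
Banach–Steinhaus theorem. -/
lemma Dop_continuous {S : ℝ → X →L[ℂ] X}
    (hcont : ∀ x : X, ContinuousOn (fun u : ℝ => S u x) (Set.Ici (0:ℝ)))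
    (l : ℂ) {t : ℝ} (ht : 0 ≤ t) : Continuous (Dop S l t) := by
  obtain ⟨C, hC⟩ : ∃ C, ∀ r : Set.Icc (0:ℝ) t, ‖S r‖ ≤ C := by
    apply banach_steinhaus
    intro x
    obtain ⟨C, hC⟩ := isCompact_Icc.exists_bound_of_continuousOn
      ((hcont x).mono (Set.Icc_subset_Ici_self : Set.Icc 0 t ⊆ _))
    exact ⟨C, fun r => hC r r.2⟩
  obtain ⟨M, hM⟩ := (isCompact_Icc (a := (0:ℝ)) (b := t)).exists_bound_of_continuousOn
    (f := fun r : ℝ => Complex.exp (l * ((t - r : ℝ) : ℂ)))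
    (Continuous.continuousOn (by fun_prop))
  let W : X →ₗ[ℂ] X :=
    IsLinearMap.mk' (Dop S l t)
      { map_add := fun x y => by simpa using Dop_lin hcont l ht 1 x y
        map_smul := fun a x => by
          have h0 : Dop S l t 0 = 0 := by simp [Dop]
          simpa [h0] using Dop_lin hcont l ht a x 0 }
  have hb : ∀ x, ‖W x‖ ≤ (M * C * |t - 0|) * ‖x‖ := by
    intro x
    have : ‖Dop S l t x‖ ≤ (M * (C * ‖x‖)) * |t - 0| := by
      apply intervalIntegral.norm_integral_le_of_norm_le_const
      intro r hr
      rw [Set.uIoc_of_le ht] at hr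
      have hr' : r ∈ Set.Icc 0 t := Set.Ioc_subset_Icc_self hr
      rw [norm_smul]
      have h2 : ‖S r x‖ ≤ C * ‖x‖ := (S r).le_of_opNorm_le (hC ⟨r, hr'⟩) x
      exact mul_le_mul (hM r hr') h2 (norm_nonneg _) ((norm_nonneg _).trans (hM r hr'))
    calc ‖W x‖ ≤ _ := this
      _ = _ := by ring
  exact (W.mkContinuous _ hb).continuous

/-- `D_λ(t) (λ − A) x = c_λ(t) x − S(t) x` for `x ∈ D(A)`. The pair `x`, `y = A x` enters only through
the integrated equation `hxy`. -/
lemma Dop_sub {α : ℝ} (hα : 0 < α) {S : ℝ → X →L[ℂ] X}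
    (hcont : ∀ x : X, ContinuousOn (fun u : ℝ => S u x) (Set.Ici (0:ℝ)))
    {x y : X}
    (hxy : ∀ u : ℝ, 0 ≤ u →
      S u x = (((u ^ α : ℝ) : ℂ) / ((Real.Gamma (α + 1) : ℝ) : ℂ)) • x + ∫ s in (0:ℝ)..u, S s y)
    (l : ℂ) {t : ℝ} (ht : 0 ≤ t) :
    Dop S l t (l • x - y) = cConst α l t • x - S t x := by
  have hS0 : S 0 x = 0 := by
    rw [hxy 0 le_rfl, Real.zero_rpow hα.ne']; simp
  have hΓ : Real.Gamma α ≠ 0 := (Real.Gamma_pos_of_pos hα).ne'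
  have hyint : ∀ s : ℝ, 0 ≤ s → IntervalIntegrable (fun r => S r y) volume 0 s := fun s hs =>
    ((hcont y).mono (uIcc_subset_Ici hs)).intervalIntegrable
  have hderS : ∀ r ∈ Set.Ioo 0 t, HasDerivAt (fun r => S r x)
      ((((r ^ (α - 1) : ℝ) : ℂ) / ((Real.Gamma α : ℝ) : ℂ)) • x + S r y) r := by
    intro r hr
    have h1 : HasDerivAt (fun u : ℝ => ((u ^ α : ℝ) : ℂ) / ((Real.Gamma (α + 1) : ℝ) : ℂ))
        (((r ^ (α - 1) : ℝ) : ℂ) / ((Real.Gamma α : ℝ) : ℂ)) r := by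
      have h := ((Real.hasDerivAt_rpow_const (x := r) (p := α) (Or.inl hr.1.ne')).ofReal_comp).div_const
        ((Real.Gamma (α + 1) : ℝ) : ℂ)
      refine h.congr_deriv ?_
      rw [Real.Gamma_add_one hα.ne']
      have h1 : ((Real.Gamma α : ℝ) : ℂ) ≠ 0 := by exact_mod_cast hΓ
      have h2 : (α : ℂ) ≠ 0 := by exact_mod_cast hα.ne'
      push_cast
      field_simp
    have hnhds : Set.Ioi (0:ℝ) ∈ nhds r := Ioi_mem_nhds hr.1
    have h2 : HasDerivAt (fun u : ℝ => ∫ s in (0:ℝ)..u, S s y) (S r y) r := by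
      apply intervalIntegral.integral_hasDerivAt_right (hyint r hr.1.le)
      · exact ContinuousOn.stronglyMeasurableAtFilter isOpen_Ioi
          ((hcont y).mono Set.Ioi_subset_Ici_self) r hr.1
      · exact (hcont y).continuousAt (Ici_mem_nhds hr.1)
    refine ((h1.smul_const x).add h2).congr_of_eventuallyEq ?_
    filter_upwards [hnhds] with u hu
    simpa using hxy u (le_of_lt hu)
  have hder : ∀ r ∈ Set.Ioo 0 t, HasDerivAt (fun r : ℝ => Complex.exp (-l * (r : ℂ)) • S r x)
      ((Complex.exp (-l * (r : ℂ)) * ((r ^ (α - 1) : ℝ) : ℂ) / ((Real.Gamma α : ℝ) : ℂ)) • x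
        - Complex.exp (-l * (r : ℂ)) • S r (l • x - y)) r := by
    intro r hr
    have h1 : HasDerivAt (fun r : ℝ => Complex.exp (-l * (r : ℂ)))
        (Complex.exp (-l * (r : ℂ)) * (-l * 1)) r :=
      ((Complex.ofRealCLM.hasDerivAt (x := r)).const_mul (-l)).cexp
    refine (h1.smul (hderS r hr)).congr_deriv ?_
    rw [map_sub, map_smul]
    module
  have hI1 : IntervalIntegrable (fun r : ℝ => (Complex.exp (-l * (r : ℂ)) *
      ((r ^ (α - 1) : ℝ) : ℂ) / ((Real.Gamma α : ℝ) : ℂ)) • x) volume 0 t :=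
    ⟨(kernel_integrable hα l 0 t).1.smul_const x, (kernel_integrable hα l 0 t).2.smul_const x⟩
  have hI2 := exp_smul_integrable hcont l ht (l • x - y)
  have key := intervalIntegral.integral_eq_sub_of_hasDerivAt_of_le ht
    (f := fun r : ℝ => Complex.exp (-l * (r : ℂ)) • S r x)
    (ContinuousOn.smul (Continuous.continuousOn (by fun_prop))
      ((hcont x).mono Set.Icc_subset_Ici_self)) hder (hI1.sub hI2)
  rw [intervalIntegral.integral_sub hI1 hI2, intervalIntegral.integral_smul_const] at key
  simp only [hS0, smul_zero, sub_zero] at key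
  rw [Dop_eq, cConst_eq, mul_smul]
  have e1 : S t x = Complex.exp (l * (t : ℂ)) • Complex.exp (-l * (t : ℂ)) • S t x := by
    rw [smul_smul, ← Complex.exp_add]; simp
  rw [e1, ← smul_sub, ← key]
  simp

/-- `L_λ(t) (λ − A) x = φ_λ(t) x − e^{−λt} D_λ(t) x` for `x ∈ D(A)`, again with `y = A x` encoded
by `hxy`: integrate the identity of `Dop_sub` against `e^{−λs}`. -/
lemma Lop_sub {α : ℝ} (hα : 0 < α) {S : ℝ → X →L[ℂ] X}
    (hcont : ∀ x : X, ContinuousOn (fun u : ℝ => S u x) (Set.Ici (0:ℝ)))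
    {x y : X}
    (hxy : ∀ u : ℝ, 0 ≤ u →
      S u x = (((u ^ α : ℝ) : ℂ) / ((Real.Gamma (α + 1) : ℝ) : ℂ)) • x + ∫ s in (0:ℝ)..u, S s y)
    (l : ℂ) {t : ℝ} (ht : 0 ≤ t) :
    Lop S l t (l • x - y) =
      phiConst α l t • x - Complex.exp (-l * (t : ℂ)) • Dop S l t x := by
  have e1 : Complex.exp (-l * (t : ℂ)) • Dop S l t x =
      ∫ r in (0:ℝ)..t, Complex.exp (-l * (r : ℂ)) • S r x := by
    rw [Dop_eq, smul_smul, ← Complex.exp_add]; simp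
  have hk : IntervalIntegrable (fun s : ℝ => ∫ r in (0:ℝ)..s,
      Complex.exp (-l * (r : ℂ)) * ((r ^ (α - 1) : ℝ) : ℂ) / ((Real.Gamma α : ℝ) : ℂ))
      volume 0 t := by
    apply ContinuousOn.intervalIntegrable
    exact intervalIntegral.continuousOn_primitive_interval
      ((intervalIntegrable_iff' (by simp)).1 (kernel_integrable hα l 0 t))
  have hkx : IntervalIntegrable (fun s : ℝ => (∫ r in (0:ℝ)..s, Complex.exp (-l * (r : ℂ)) *
      ((r ^ (α - 1) : ℝ) : ℂ) / ((Real.Gamma α : ℝ) : ℂ)) • x) volume 0 t :=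
    ⟨hk.1.smul_const x, hk.2.smul_const x⟩
  rw [e1, phiConst, ← intervalIntegral.integral_smul_const,
    ← intervalIntegral.integral_sub hkx (exp_smul_integrable hcont l ht x), Lop]
  apply intervalIntegral.integral_congr
  intro s hs
  simp only
  rw [Dop_sub hα hcont hxy l (uIcc_subset_Ici ht hs), cConst_eq, smul_sub, smul_smul, ← mul_assoc,
    ← Complex.exp_add]
  simp

end Aux

theorem stmt_10
    {X : Type*} [NormedAddCommGroup X] [NormedSpace ℂ X] [CompleteSpace X]
    (α : ℝ) (hα : 0 < α)
    (D : Submodule ℂ X) (A : X →ₗ[ℂ] X)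
    (S : ℝ → X →L[ℂ] X)
    (hcont : ∀ x : X, ContinuousOn (fun u : ℝ => S u x) (Set.Ici (0:ℝ)))
    (hcomm : ∀ u v : ℝ, 0 ≤ u → 0 ≤ v → ∀ x : X, S u (S v x) = S v (S u x))
    (hres : ∃ μ : ℂ, ∃ R : X →L[ℂ] X, (∀ x : X, R x ∈ D) ∧
      (∀ x : X, μ • R x - A (R x) = x) ∧ (∀ x ∈ D, R (μ • x - A x) = x))
    (hdom : ∀ u : ℝ, 0 ≤ u → ∀ x ∈ D, S u x ∈ D ∧ A (S u x) = S u (A x) ∧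
      S u x = (((u ^ α : ℝ) : ℂ) / ((Real.Gamma (α + 1) : ℝ) : ℂ)) • x +
        ∫ s in (0:ℝ)..u, S s (A x))
    (hint : ∀ u : ℝ, 0 ≤ u → ∀ x : X, (∫ s in (0:ℝ)..u, S s x) ∈ D ∧
      A (∫ s in (0:ℝ)..u, S s x) =
        S u x - (((u ^ α : ℝ) : ℂ) / ((Real.Gamma (α + 1) : ℝ) : ℂ)) • x)
    (l : ℂ) (t : ℝ)
    (ht : 0 < t) (hphi : phiConst α l t ≠ 0)
    (hcl : IsClosed (Set.range ⇑(cSop S α l t)))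
    (hker : ∀ x : X, cSop S α l t x = 0 →
      ∀ n : ℕ, 1 ≤ n → x ∈ Set.range ⇑(cSop S α l t ^ n)) :
    IsClosed ((fun y => l • y - A y) '' (D : Set X)) ∧
      ∀ x ∈ D, l • x - A x = 0 → ∀ n : ℕ, 1 ≤ n →
        x ∈ (fun y => l • y - A y)^[n] '' iterDom (D : Set X) (fun y => l • y - A y) n := by
  obtain ⟨μ, R, hRD, hAR, hRA⟩ := hres
  have hRS : ∀ u : ℝ, 0 ≤ u → ∀ x, R (S u x) = S u (R x) := by
    intro u hu x
    obtain ⟨h1, h2, -⟩ := hdom u hu (R x) (hRD x)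
    rw [← hRA _ h1, h2, ← map_smul, ← map_sub, hAR]
  have hT : ∀ x, cSop S α l t x = cConst α l t • x - S t x := fun x => by simp [cSop]
  have hWB : ∀ x ∈ D, Dop S l t (l • x - A x) = cSop S α l t x := fun x hx => by
    rw [hT]; exact Dop_sub hα hcont (fun u hu => (hdom u hu x hx).2.2) l ht.le
  have hBW := mem_and_eq_of_commute hRD hAR l (Dop_lin hcont l ht.le)
    (Dop_comm hcont R hRS l ht.le)
    (fun x => by rw [hT, hT, map_sub, map_smul, hRS t ht.le]) hWB
  have hBL := mem_and_eq_of_commute hRD hAR l (Lop_lin hcont l ht.le)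
    (Lop_comm hcont R hRS l ht.le)
    (G := fun x => phiConst α l t • x - Complex.exp (-l * (t : ℂ)) • Dop S l t x)
    (fun x => by rw [map_sub, map_smul, map_smul, Dop_comm hcont R hRS l ht.le])
    (fun x hx => Lop_sub hα hcont (fun u hu => (hdom u hu x hx).2.2) l ht.le)
  have hTW : ∀ x, cSop S α l t (Dop S l t x) = Dop S l t (cSop S α l t x) := fun x => by
    rw [← hWB _ (hBW x).1, (hBW x).2]
  refine ⟨?_, ?_⟩
  · have hcW := Dop_continuous hcont l ht.le
    refine isClosed_of_closure_subset fun y hy => ?_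
    have h1 : Dop S l t y ∈ Set.range (cSop S α l t) := by
      rw [← hcl.closure_eq]
      refine map_mem_closure hcW hy ?_
      rintro _ ⟨x, hx, rfl⟩
      exact ⟨x, (hWB x hx).symm⟩
    obtain ⟨z, hz⟩ := h1
    have hz' := (hBW z).2
    obtain ⟨hL1, hL2⟩ := hBL y
    refine ⟨(phiConst α l t)⁻¹ • (Lop S l t y + Complex.exp (-l * (t : ℂ)) • Dop S l t z),
      D.smul_mem _ (D.add_mem hL1 (D.smul_mem _ (hBW z).1)), ?_⟩
    have e : l • (Lop S l t y + Complex.exp (-l * (t : ℂ)) • Dop S l t z)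
        - A (Lop S l t y + Complex.exp (-l * (t : ℂ)) • Dop S l t z) = phiConst α l t • y := by
      rw [hz] at hz'
      have : l • (Lop S l t y + Complex.exp (-l * (t : ℂ)) • Dop S l t z)
        - A (Lop S l t y + Complex.exp (-l * (t : ℂ)) • Dop S l t z) =
        (l • Lop S l t y - A (Lop S l t y)) +
          Complex.exp (-l * (t : ℂ)) • (l • Dop S l t z - A (Dop S l t z)) := by
        rw [map_add, map_smul]; module
      rw [this, hL2, hz']
      simp
    simp only
    rw [map_smul, smul_comm, ← smul_sub, e, smul_smul, inv_mul_cancel₀ hphi, one_smul]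
  · intro x hx hx0 n hn
    have h0 : Dop S l t 0 = 0 := by simp [Dop]
    have hTx : cSop S α l t x = 0 := by rw [← hWB x hx, hx0, h0]
    obtain ⟨w, hw⟩ := hker x hTx n hn
    -- `Bⁿ Wⁿ = Tⁿ`, by moving `B W = T` to the innermost position.
    have key : ∀ (n : ℕ) (w : X),
        (Dop S l t)^[n] w ∈ iterDom (D : Set X) (fun y => l • y - A y) n ∧
        (fun y => l • y - A y)^[n] ((Dop S l t)^[n] w) = (cSop S α l t ^ n) w := by
      intro n
      induction n with
      | zero => intro w; exact ⟨trivial, rfl⟩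
      | succ n ih =>
        intro w
        have hc : l • (Dop S l t)^[n+1] w - A ((Dop S l t)^[n+1] w) =
            (Dop S l t)^[n] (cSop S α l t w) := by
          rw [Function.iterate_succ_apply', (hBW _).2]
          exact (Function.Commute.iterate_right (f := cSop S α l t) (fun x => hTW x) n) w
        obtain ⟨i1, i2⟩ := ih (cSop S α l t w)
        refine ⟨⟨?_, ?_⟩, ?_⟩
        · rw [Function.iterate_succ_apply']; exact (hBW _).1
        · simp only [hc]; exact i1
        · rw [Function.iterate_succ_apply]
          simp only [hc]
          rw [i2, pow_succ]; rfl
    exact ⟨_, (key n w).1, (key n w).2.trans hw⟩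
end
end

section
/- Let λ ∈ ℂ, t > 0 with φ_λ(t) ≠ 0, and let n ≥ 1 be an integer. If the subspace R(c_λ(t)·I − S(t)) + N((c_λ(t)·I − S(t))^n) is closed in X, then the subspace R(λ − A) + N((λ − A)^n) is closed in X. -/
/-! Write `B = λ - A` and `T = c_λ(t) - S(t)`. The operator `D_λ(t)` is bounded, commutes with
`T`, maps into the domain of `A`, and satisfies `B D_λ(t) = T` everywhere, `D_λ(t) B = T` on the
domain (`Dop_mem_and_sub`, `Dop_resolvent_comm`). Moreover
`B L_λ(t) + e^{-λt} D_λ(t) = φ_λ(t)` (`Lop_mem_and_sub`), so that for `φ_λ(t) ≠ 0` every vector `y`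
is congruent modulo `R(B)` to a multiple of `D_λ(t) y`.

From these identities alone, `y ∈ R(B) + N(B^n)` if and only if
`D_λ(t) y ∈ R(T) + N(T^n)`. Forward: `D_λ(t)` maps `R(B)` into `R(T)`, and `N(B^n) ⊆ N(T^n)` is
invariant under `D_λ(t)`. Backward: if `D_λ(t) y = T x + w` with `T^n w = 0`, then `y` is congruent
modulo `R(B)` to a multiple of `w`, which is congruent to a multiple of `D_λ(t)^n w`, and
`B^n D_λ(t)^n w = T^n w = 0`. Hence `R(B) + N(B^n)` is the preimage of a closed set under a
bounded operator (`isClosed_of_factor`).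

The first identity comes from integrating by parts in `D_λ(t)` and in `c_λ(t)`, which expresses
both through the antiderivatives `∫₀ʳ S(s) x ds` and `r^α / Γ(α+1)`; the closedness of `A`, encoded
by its resolvent, moves `A` under the integral sign (`integral_mem_domain`). -/

open MeasureTheory intervalIntegral Pointwise

noncomputable section

/-! ### The algebraic reduction -/

section Reduction

variable {X : Type*} [NormedAddCommGroup X] [NormedSpace ℂ X]

/-- `B^n K^n = T^n`, including the domain statement `K^n x ∈ D(B^n)`. -/
lemma iter_factor (D : Submodule ℂ X) (B : X →ₗ[ℂ] X) (K T : X →L[ℂ] X)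
    (hKD : ∀ x, K x ∈ D) (hBK : ∀ x, B (K x) = T x) (hKT : ∀ x, K (T x) = T (K x)) (n : ℕ) :
    ∀ x, (K ^ n) x ∈ iterDom (D : Set X) (⇑B) n ∧ (⇑B)^[n] ((K ^ n) x) = (T ^ n) x := by
  induction n with
  | zero => intro x; simp [iterDom]
  | succ k ih =>
    intro x
    have hc : T * K = K * T := by ext y; exact (hKT y).symm
    have h1 : B ((K ^ (k + 1)) x) = (K ^ k) (T x) := by
      have h2 : T * K ^ k = K ^ k * T := (Commute.pow_right hc k)
      rw [pow_succ', mul_apply_eq_comp, hBK]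
      exact DFunLike.congr_fun h2 x
    refine ⟨⟨?_, ?_⟩, ?_⟩
    · rw [pow_succ', mul_apply_eq_comp]; exact hKD _
    · rw [h1]; exact (ih _).1
    · rw [Function.iterate_succ_apply, h1, (ih _).2, pow_succ, mul_apply_eq_comp]

/-- `N(B^n) ⊆ N(T^n)`, because `T = K B` on the domain and `K` commutes with `T`. -/
lemma iter_ker (D : Submodule ℂ X) (B : X →ₗ[ℂ] X) (K T : X →L[ℂ] X)
    (hKB : ∀ x ∈ D, K (B x) = T x) (hKT : ∀ x, K (T x) = T (K x)) (n : ℕ) :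
    ∀ x, x ∈ iterDom (D : Set X) (⇑B) n → (⇑B)^[n] x = 0 → (T ^ n) x = 0 := by
  have hc : T * K = K * T := by ext y; exact (hKT y).symm
  induction n with
  | zero => intro x _ h; simpa using h
  | succ k ih =>
    intro x hx h
    rw [Function.iterate_succ_apply] at h
    have h1 := ih _ hx.2 h
    have h2 : T ^ k * K = K * T ^ k := (Commute.pow_left hc k)
    have h3 := DFunLike.congr_fun h2 (B x)
    simp only [mul_apply_eq_comp] at h3
    rw [pow_succ, mul_apply_eq_comp, ← hKB x hx.1, h3, h1, map_zero]

/-- If `T = B K` with `K` bounded and `φ - e K` maps into `R(B)` for some `φ ≠ 0`, then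
closedness of `R(T) + N(T^n)` passes to `R(B) + N(B^n)`, which is its preimage under `K`. -/
lemma isClosed_of_factor (D : Submodule ℂ X) (B : X →ₗ[ℂ] X) (K T : X →L[ℂ] X)
    (φ e : ℂ) (hφ : φ ≠ 0)
    (hKD : ∀ x, K x ∈ D) (hBK : ∀ x, B (K x) = T x) (hKB : ∀ x ∈ D, K (B x) = T x)
    (hKT : ∀ x, K (T x) = T (K x)) (hL : ∀ x, ∃ z ∈ D, B z = φ • x - e • K x) (n : ℕ)
    (hcl : IsClosed (Set.range ⇑T + {y : X | (T ^ n) y = 0})) :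
    IsClosed ((⇑B) '' (D : Set X) +
      {y : X | y ∈ iterDom (D : Set X) (⇑B) n ∧ (⇑B)^[n] y = 0}) := by
  set P : Submodule ℂ X := D.map B with hP
  have hone : ∀ x, x - (e / φ) • K x ∈ P := by
    intro x
    obtain ⟨z, hz, hz'⟩ := hL x
    refine ⟨φ⁻¹ • z, D.smul_mem _ hz, ?_⟩
    rw [map_smul, hz', smul_sub, smul_smul, smul_smul, inv_mul_cancel₀ hφ, one_smul,
      div_eq_inv_mul]
  have hpow : ∀ k : ℕ, ∀ x, x - (K ^ k) ((e / φ) ^ k • x) ∈ P := by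
    intro k
    induction k with
    | zero => intro x; simp
    | succ k ih =>
      intro x
      have h1 := P.add_mem (ih x) (hone ((K ^ k) ((e / φ) ^ k • x)))
      convert h1 using 1
      rw [pow_succ' K, mul_apply_eq_comp, pow_succ']
      simp only [map_smul, mul_smul]
      abel
  convert hcl.preimage K.continuous using 1
  ext y
  simp only [Set.mem_preimage, Set.mem_add]
  constructor
  · rintro ⟨_, ⟨x, hx, rfl⟩, z, ⟨hz, hz'⟩, rfl⟩
    refine ⟨T x, ⟨x, rfl⟩, K z, ?_, ?_⟩
    · have hc : T * K = K * T := by ext y; exact (hKT y).symm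
      have h2 : T ^ n * K = K * T ^ n := (Commute.pow_left hc n)
      have h3 := DFunLike.congr_fun h2 z
      simp only [mul_apply_eq_comp] at h3
      change (T ^ n) (K z) = 0
      rw [h3, iter_ker D B K T hKB hKT n z hz hz', map_zero]
    · rw [map_add, hKB x hx]
  · rintro ⟨_, ⟨x, rfl⟩, w, hw, hyw⟩
    have hw : (T ^ n) w = 0 := hw
    set v := (K ^ n) ((e / φ) ^ n • (e / φ) • w) with hv
    have hv' := iter_factor D B K T hKD hBK hKT n ((e / φ) ^ n • (e / φ) • w)
    have hmem : y - v ∈ P := by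
      have h1 := hone y
      have h2 := hpow n ((e / φ) • w)
      have h3 : (e / φ) • T x ∈ P := P.smul_mem _ ⟨K x, hKD x, hBK x⟩
      convert P.add_mem (P.add_mem h1 h2) h3 using 1
      rw [← hyw, smul_add]
      abel
    obtain ⟨z, hz, hz'⟩ := hmem
    refine ⟨B z, ⟨z, hz, rfl⟩, v, ⟨hv'.1, ?_⟩, ?_⟩
    · rw [hv'.2]; simp [hw]
    · rw [hz']; abel

end Reduction

/-! ### The operators `D_λ(t)` and `L_λ(t)` -/

section Operators

variable {X : Type*} [NormedAddCommGroup X] [NormedSpace ℂ X]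

lemma expS_integrable {S : ℝ → X →L[ℂ] X}
    (hcont : ∀ x : X, ContinuousOn (fun u : ℝ => S u x) (Set.Ici (0:ℝ)))
    {k : ℝ → ℂ} (hk : Continuous k) {t : ℝ} (ht : 0 ≤ t) (x : X) :
    IntervalIntegrable (fun r => k r • S r x) volume 0 t := by
  apply ContinuousOn.intervalIntegrable
  rw [Set.uIcc_of_le ht]
  exact hk.continuousOn.smul ((hcont x).mono Set.Icc_subset_Ici_self)

lemma exp_neg_mul_exp_sub (l : ℂ) (s r : ℝ) :
    Complex.exp (-l * (s : ℂ)) * Complex.exp (l * ((s - r : ℝ) : ℂ)) =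
      Complex.exp (-l * (r : ℂ)) := by
  rw [← Complex.exp_add]
  congr 1
  push_cast
  ring

lemma exp_smul_Dop (S : ℝ → X →L[ℂ] X) (l : ℂ) (s : ℝ) (x : X) :
    Complex.exp (-l * (s : ℂ)) • Dop S l s x =
      ∫ r in (0:ℝ)..s, Complex.exp (-l * (r : ℂ)) • S r x := by
  unfold Dop
  rw [← intervalIntegral.integral_smul]
  simp only [smul_smul, exp_neg_mul_exp_sub]

lemma exp_mul_cConst (α : ℝ) (l : ℂ) (s : ℝ) :
    Complex.exp (-l * (s : ℂ)) * cConst α l s =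
      ∫ r in (0:ℝ)..s, Complex.exp (-l * ((r : ℝ) : ℂ)) * ((r ^ (α - 1) : ℝ) : ℂ) /
        ((Real.Gamma α : ℝ) : ℂ) := by
  unfold cConst
  rw [← intervalIntegral.integral_const_mul]
  simp only [← mul_div_assoc, ← mul_assoc, exp_neg_mul_exp_sub]

variable [CompleteSpace X]

/-- An operator with a bounded resolvent is closed, hence commutes with integrals. -/
lemma integral_mem_domain (D : Submodule ℂ X) (A : X →ₗ[ℂ] X)
    (hres : ∃ μ : ℂ, ∃ R : X →L[ℂ] X, (∀ x : X, R x ∈ D) ∧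
      (∀ x : X, μ • R x - A (R x) = x) ∧ (∀ x ∈ D, R (μ • x - A x) = x))
    {t : ℝ} (ht : 0 ≤ t) {f g : ℝ → X}
    (hf : IntervalIntegrable f volume 0 t) (hg : IntervalIntegrable g volume 0 t)
    (h : ∀ r ∈ Set.Icc 0 t, f r ∈ D ∧ A (f r) = g r) :
    (∫ r in (0:ℝ)..t, f r) ∈ D ∧ A (∫ r in (0:ℝ)..t, f r) = ∫ r in (0:ℝ)..t, g r := by
  obtain ⟨μ, R, hR1, hR2, hR3⟩ := hres
  have hμf : IntervalIntegrable (fun r => μ • f r) volume 0 t := hf.smul μ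
  have key : (∫ r in (0:ℝ)..t, f r) =
      R (μ • (∫ r in (0:ℝ)..t, f r) - ∫ r in (0:ℝ)..t, g r) := by
    rw [← intervalIntegral.integral_smul, ← intervalIntegral.integral_sub hμf hg,
      ← R.intervalIntegral_comp_comm (hμf.sub hg)]
    apply intervalIntegral.integral_congr
    intro r hr
    rw [Set.uIcc_of_le ht] at hr
    obtain ⟨h1, h2⟩ := h r hr
    dsimp only
    rw [← h2, hR3 _ h1]
  refine ⟨by rw [key]; exact hR1 _, ?_⟩
  have h2 := hR2 (μ • (∫ r in (0:ℝ)..t, f r) - ∫ r in (0:ℝ)..t, g r)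
  rw [← key] at h2
  have := sub_right_injective h2
  exact this

/-- `D_λ(t)` as a bounded operator; the bound comes from the uniform boundedness principle. -/
lemma exists_Dop_clm {S : ℝ → X →L[ℂ] X}
    (hcont : ∀ x : X, ContinuousOn (fun u : ℝ => S u x) (Set.Ici (0:ℝ)))
    (l : ℂ) {t : ℝ} (ht : 0 ≤ t) :
    ∃ K : X →L[ℂ] X, ∀ x, K x = Dop S l t x := by
  have hk : Continuous fun r : ℝ => Complex.exp (l * ((t - r : ℝ) : ℂ)) := by fun_prop
  obtain ⟨M, hM⟩ : ∃ M, ∀ i : Set.Icc (0:ℝ) t,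
      ‖Complex.exp (l * ((t - i.1 : ℝ) : ℂ)) • S i.1‖ ≤ M := by
    apply banach_steinhaus
    intro x
    have hc : ContinuousOn (fun r : ℝ => Complex.exp (l * ((t - r : ℝ) : ℂ)) • S r x)
        (Set.Icc 0 t) := hk.continuousOn.smul ((hcont x).mono Set.Icc_subset_Ici_self)
    obtain ⟨C, hC⟩ := isCompact_Icc.exists_bound_of_continuousOn hc
    exact ⟨C, fun i => hC i.1 i.2⟩
  refine ⟨LinearMap.mkContinuous
    { toFun := Dop S l t
      map_add' := ?_
      map_smul' := ?_ } (M * |t - 0|) ?_, fun x => rfl⟩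
  · intro x y
    unfold Dop
    rw [← intervalIntegral.integral_add (expS_integrable hcont hk ht x)
      (expS_integrable hcont hk ht y)]
    simp only [map_add, smul_add]
  · intro c x
    unfold Dop
    rw [RingHom.id_apply, ← intervalIntegral.integral_smul]
    simp only [map_smul, smul_comm c]
  · intro x
    change ‖Dop S l t x‖ ≤ _
    unfold Dop
    have h := intervalIntegral.norm_integral_le_of_norm_le_const (a := 0) (b := t)
      (C := M * ‖x‖) (f := fun r : ℝ => Complex.exp (l * ((t - r : ℝ) : ℂ)) • S r x) (by
        intro r hr
        rw [Set.uIoc_of_le ht] at hr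
        exact ((Complex.exp (l * ((t - r : ℝ) : ℂ)) • S r).le_opNorm x).trans
          (mul_le_mul_of_nonneg_right (hM ⟨r, hr.1.le, hr.2⟩) (norm_nonneg x)))
    refine h.trans (le_of_eq (by ring))

/-- Integration by parts: `∫₀ᵗ e^{λ(t-r)} f(r) dr = F(t) + λ ∫₀ᵗ e^{λ(t-r)} F(r) dr` when
`F` is an antiderivative of `f` with `F(0) = 0`. -/
lemma exp_parts (l : ℂ) {t : ℝ} (ht : 0 ≤ t) {F f : ℝ → X}
    (hF : ContinuousOn F (Set.Icc 0 t)) (hF0 : F 0 = 0)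
    (hd : ∀ r ∈ Set.Ioo 0 t, HasDerivAt F (f r) r)
    (hf : IntervalIntegrable f volume 0 t) :
    ∫ r in (0:ℝ)..t, Complex.exp (l * ((t - r : ℝ) : ℂ)) • f r =
      F t + l • ∫ r in (0:ℝ)..t, Complex.exp (l * ((t - r : ℝ) : ℂ)) • F r := by
  have hk : Continuous fun r : ℝ => Complex.exp (l * ((t - r : ℝ) : ℂ)) := by fun_prop
  have hkd : ∀ r : ℝ, HasDerivAt (fun r : ℝ => Complex.exp (l * ((t - r : ℝ) : ℂ)))
      (Complex.exp (l * ((t - r : ℝ) : ℂ)) * (l * (-1))) r := by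
    intro r
    have h1 : HasDerivAt (fun r : ℝ => ((t - r : ℝ) : ℂ)) ((-1 : ℝ) : ℂ) r :=
      ((hasDerivAt_id r).const_sub t).ofReal_comp
    simpa using (h1.const_mul l).cexp
  have hFi : IntervalIntegrable (fun r : ℝ => Complex.exp (l * ((t - r : ℝ) : ℂ)) • F r)
      volume 0 t := by
    apply ContinuousOn.intervalIntegrable
    rw [Set.uIcc_of_le ht]
    exact hk.continuousOn.smul hF
  have hlF : IntervalIntegrable (fun r : ℝ => l • Complex.exp (l * ((t - r : ℝ) : ℂ)) • F r)
      volume 0 t := hFi.smul l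
  have hfi : IntervalIntegrable (fun r : ℝ => Complex.exp (l * ((t - r : ℝ) : ℂ)) • f r)
      volume 0 t := hf.continuousOn_smul hk.continuousOn
  have h := intervalIntegral.integral_eq_sub_of_hasDerivAt_of_le ht
    (f := fun r : ℝ => Complex.exp (l * ((t - r : ℝ) : ℂ)) • F r)
    (f' := fun r : ℝ => Complex.exp (l * ((t - r : ℝ) : ℂ)) • f r -
      l • Complex.exp (l * ((t - r : ℝ) : ℂ)) • F r)
    (hk.continuousOn.smul hF) (by
      intro r hr
      refine ((hkd r).smul (hd r hr)).congr_deriv ?_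
      rw [mul_neg_one, mul_neg, neg_smul, mul_smul, smul_comm l, ← sub_eq_add_neg])
    (hfi.sub hlF)
  rw [intervalIntegral.integral_sub hfi hlF, intervalIntegral.integral_smul] at h
  simp only [sub_self, Complex.ofReal_zero, mul_zero, Complex.exp_zero, one_smul, hF0, smul_zero,
    sub_zero] at h
  rw [← h]
  abel

lemma rpow_kernel_integrable {α : ℝ} (hα : 0 < α) (t : ℝ) :
    IntervalIntegrable (fun s : ℝ => ((s ^ (α - 1) : ℝ) : ℂ) / ((Real.Gamma α : ℝ) : ℂ))
      volume 0 t := by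
  have h : IntervalIntegrable (fun s : ℝ => s ^ (α - 1)) volume 0 t :=
    intervalIntegral.intervalIntegrable_rpow' (by linarith)
  have h' : IntervalIntegrable (fun s : ℝ => ((s ^ (α - 1) : ℝ) : ℂ)) volume 0 t :=
    ⟨h.1.ofReal, h.2.ofReal⟩
  exact h'.div_const _

lemma cConst_parts {α : ℝ} (hα : 0 < α) (l : ℂ) {t : ℝ} (ht : 0 ≤ t) :
    cConst α l t = (((t ^ α : ℝ) : ℂ) / ((Real.Gamma (α + 1) : ℝ) : ℂ)) +
      l * ∫ r in (0:ℝ)..t, Complex.exp (l * ((t - r : ℝ) : ℂ)) *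
        (((r ^ α : ℝ) : ℂ) / ((Real.Gamma (α + 1) : ℝ) : ℂ)) := by
  have hG : Real.Gamma α ≠ 0 := (Real.Gamma_pos_of_pos hα).ne'
  have h := exp_parts l ht (X := ℂ)
    (F := fun r : ℝ => (((r ^ α : ℝ) : ℂ) / ((Real.Gamma (α + 1) : ℝ) : ℂ)))
    (f := fun s : ℝ => ((s ^ (α - 1) : ℝ) : ℂ) / ((Real.Gamma α : ℝ) : ℂ))
    (by
      have : Continuous fun r : ℝ => r ^ α := Real.continuous_rpow_const hα.le
      exact ((Complex.continuous_ofReal.comp this).div_const _).continuousOn)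
    (by simp [Real.zero_rpow hα.ne'])
    (by
      intro r hr
      have h1 := ((Real.hasDerivAt_rpow_const (x := r) (p := α) (Or.inl hr.1.ne')).ofReal_comp
        ).div_const ((Real.Gamma (α + 1) : ℝ) : ℂ)
      refine h1.congr_deriv ?_
      rw [Real.Gamma_add_one hα.ne']
      have hG' : ((Real.Gamma α : ℝ) : ℂ) ≠ 0 := by exact_mod_cast hG
      have hα' : (α : ℂ) ≠ 0 := by exact_mod_cast hα.ne'
      push_cast
      field_simp)
    (rpow_kernel_integrable hα t)
  simp only [smul_eq_mul] at h
  rw [← h]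
  unfold cConst
  simp only [mul_div_assoc]

/-- `(λ - A) D_λ(t) = c_λ(t) - S(t)`. -/
lemma Dop_mem_and_sub {α : ℝ} (hα : 0 < α)
    (D : Submodule ℂ X) (A : X →ₗ[ℂ] X)
    (S : ℝ → X →L[ℂ] X)
    (hcont : ∀ x : X, ContinuousOn (fun u : ℝ => S u x) (Set.Ici (0:ℝ)))
    (hres : ∃ μ : ℂ, ∃ R : X →L[ℂ] X, (∀ x : X, R x ∈ D) ∧
      (∀ x : X, μ • R x - A (R x) = x) ∧ (∀ x ∈ D, R (μ • x - A x) = x))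
    (hint : ∀ u : ℝ, 0 ≤ u → ∀ x : X, (∫ s in (0:ℝ)..u, S s x) ∈ D ∧
      A (∫ s in (0:ℝ)..u, S s x) =
        S u x - (((u ^ α : ℝ) : ℂ) / ((Real.Gamma (α + 1) : ℝ) : ℂ)) • x)
    (l : ℂ) {t : ℝ} (ht : 0 ≤ t) (x : X) :
    Dop S l t x ∈ D ∧ l • Dop S l t x - A (Dop S l t x) = cConst α l t • x - S t x := by
  have hk : Continuous fun r : ℝ => Complex.exp (l * ((t - r : ℝ) : ℂ)) := by fun_prop
  have hSi : IntervalIntegrable (fun r => S r x) volume 0 t := by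
    simpa using expS_integrable hcont (k := fun _ => 1) continuous_const ht x
  have hW : ContinuousOn (fun r => ∫ s in (0:ℝ)..r, S s x) (Set.Icc 0 t) := by
    have := intervalIntegral.continuousOn_primitive_interval' hSi Set.left_mem_uIcc
    rwa [Set.uIcc_of_le ht] at this
  have hparts : Dop S l t x = (∫ s in (0:ℝ)..t, S s x) +
      l • ∫ r in (0:ℝ)..t, Complex.exp (l * ((t - r : ℝ) : ℂ)) • ∫ s in (0:ℝ)..r, S s x := by
    unfold Dop
    refine exp_parts l ht (F := fun r => ∫ s in (0:ℝ)..r, S s x) hW (by simp) ?_ hSi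
    intro r hr
    have hnhds : Set.Ioo 0 t ∈ nhds r := Ioo_mem_nhds hr.1 hr.2
    have hco : ContinuousOn (fun u => S u x) (Set.Ioo 0 t) :=
      (hcont x).mono fun u hu => hu.1.le
    refine intervalIntegral.integral_hasDerivAt_right ?_
      (hco.stronglyMeasurableAtFilter isOpen_Ioo r hr) (hco.continuousAt hnhds)
    simpa using expS_integrable hcont (k := fun _ => 1) continuous_const hr.1.le x
  have hgc : Continuous fun r : ℝ => ((r ^ α : ℝ) : ℂ) / ((Real.Gamma (α + 1) : ℝ) : ℂ) :=
    (Complex.continuous_ofReal.comp (Real.continuous_rpow_const hα.le)).div_const _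
  have hSe := expS_integrable hcont hk ht x
  have hge : IntervalIntegrable (fun r : ℝ => (Complex.exp (l * ((t - r : ℝ) : ℂ)) *
      (((r ^ α : ℝ) : ℂ) / ((Real.Gamma (α + 1) : ℝ) : ℂ))) • x) volume 0 t :=
    ((hk.mul hgc).smul continuous_const).intervalIntegrable _ _
  obtain ⟨h1, h2⟩ := integral_mem_domain D A hres ht
    (f := fun r : ℝ => Complex.exp (l * ((t - r : ℝ) : ℂ)) • ∫ s in (0:ℝ)..r, S s x)
    (g := fun r : ℝ => Complex.exp (l * ((t - r : ℝ) : ℂ)) • S r x -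
      (Complex.exp (l * ((t - r : ℝ) : ℂ)) *
      (((r ^ α : ℝ) : ℂ) / ((Real.Gamma (α + 1) : ℝ) : ℂ))) • x)
    (by
      apply ContinuousOn.intervalIntegrable
      rw [Set.uIcc_of_le ht]
      exact hk.continuousOn.smul hW)
    (hSe.sub hge)
    (by
      intro r hr
      refine ⟨D.smul_mem _ (hint r hr.1 x).1, ?_⟩
      rw [map_smul, (hint r hr.1 x).2, smul_sub, mul_smul])
  rw [intervalIntegral.integral_sub hSe hge, intervalIntegral.integral_smul_const] at h2
  refine ⟨by rw [hparts]; exact D.add_mem (hint t ht x).1 (D.smul_mem _ h1), ?_⟩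
  have h3 : A (Dop S l t x) = S t x - (((t ^ α : ℝ) : ℂ) / ((Real.Gamma (α + 1) : ℝ) : ℂ)) • x +
      l • (Dop S l t x - (∫ r in (0:ℝ)..t, Complex.exp (l * ((t - r : ℝ) : ℂ)) *
        (((r ^ α : ℝ) : ℂ) / ((Real.Gamma (α + 1) : ℝ) : ℂ))) • x) := by
    rw [hparts, map_add, map_smul, h2, (hint t ht x).2, ← hparts]
    rfl
  rw [h3, cConst_parts hα l ht, add_smul, mul_smul, smul_sub]
  abel

/-- `D_λ(t) (λ - A) = (λ - A) D_λ(t)` on the domain of `A`. -/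
lemma Dop_resolvent_comm
    (D : Submodule ℂ X) (A : X →ₗ[ℂ] X)
    (S : ℝ → X →L[ℂ] X)
    (hcont : ∀ x : X, ContinuousOn (fun u : ℝ => S u x) (Set.Ici (0:ℝ)))
    (hres : ∃ μ : ℂ, ∃ R : X →L[ℂ] X, (∀ x : X, R x ∈ D) ∧
      (∀ x : X, μ • R x - A (R x) = x) ∧ (∀ x ∈ D, R (μ • x - A x) = x))
    (hdom : ∀ u : ℝ, 0 ≤ u → ∀ x ∈ D, S u x ∈ D ∧ A (S u x) = S u (A x))
    (l : ℂ) {t : ℝ} (ht : 0 ≤ t) {x : X} (hx : x ∈ D) :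
    Dop S l t (l • x - A x) = l • Dop S l t x - A (Dop S l t x) := by
  have hk : Continuous fun r : ℝ => Complex.exp (l * ((t - r : ℝ) : ℂ)) := by fun_prop
  obtain ⟨K, hK⟩ := exists_Dop_clm hcont l ht
  have h := (integral_mem_domain D A hres ht (expS_integrable hcont hk ht x)
    (expS_integrable hcont hk ht (A x)) (by
      intro r hr
      obtain ⟨h1, h2⟩ := hdom r hr.1 x hx
      exact ⟨D.smul_mem _ h1, by rw [map_smul, h2]⟩)).2
  change A (Dop S l t x) = Dop S l t (A x) at h
  rw [h, ← hK, ← hK, ← hK, map_sub, map_smul]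

/-- `D_λ(t)` commutes with `S(t)`. -/
lemma Dop_comm_S (S : ℝ → X →L[ℂ] X)
    (hcont : ∀ x : X, ContinuousOn (fun u : ℝ => S u x) (Set.Ici (0:ℝ)))
    (hcomm : ∀ u v : ℝ, 0 ≤ u → 0 ≤ v → ∀ x : X, S u (S v x) = S v (S u x))
    (l : ℂ) {t : ℝ} (ht : 0 ≤ t) (x : X) :
    Dop S l t (S t x) = S t (Dop S l t x) := by
  have hk : Continuous fun r : ℝ => Complex.exp (l * ((t - r : ℝ) : ℂ)) := by fun_prop
  unfold Dop
  rw [← (S t).intervalIntegral_comp_comm (expS_integrable hcont hk ht x)]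
  apply intervalIntegral.integral_congr
  intro r hr
  rw [Set.uIcc_of_le ht] at hr
  simp only [map_smul, hcomm r t hr.1 ht]

/-- `(λ - A) L_λ(t) = φ_λ(t) - e^{-λt} D_λ(t)`. -/
lemma Lop_mem_and_sub {α : ℝ} (hα : 0 < α)
    (D : Submodule ℂ X) (A : X →ₗ[ℂ] X)
    (S : ℝ → X →L[ℂ] X)
    (hcont : ∀ x : X, ContinuousOn (fun u : ℝ => S u x) (Set.Ici (0:ℝ)))
    (hres : ∃ μ : ℂ, ∃ R : X →L[ℂ] X, (∀ x : X, R x ∈ D) ∧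
      (∀ x : X, μ • R x - A (R x) = x) ∧ (∀ x ∈ D, R (μ • x - A x) = x))
    (hint : ∀ u : ℝ, 0 ≤ u → ∀ x : X, (∫ s in (0:ℝ)..u, S s x) ∈ D ∧
      A (∫ s in (0:ℝ)..u, S s x) =
        S u x - (((u ^ α : ℝ) : ℂ) / ((Real.Gamma (α + 1) : ℝ) : ℂ)) • x)
    (l : ℂ) {t : ℝ} (ht : 0 ≤ t) (x : X) :
    Lop S l t x ∈ D ∧ l • Lop S l t x - A (Lop S l t x) =
      phiConst α l t • x - Complex.exp (-l * (t : ℂ)) • Dop S l t x := by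
  have hk : Continuous fun r : ℝ => Complex.exp (-l * (r : ℂ)) := by fun_prop
  have hSe := expS_integrable hcont hk ht x
  have hLi : IntervalIntegrable (fun s : ℝ => Complex.exp (-l * (s : ℂ)) • Dop S l s x)
      volume 0 t := by
    simp only [exp_smul_Dop]
    exact (intervalIntegral.continuousOn_primitive_interval' hSe
      Set.left_mem_uIcc).intervalIntegrable
  have hci : IntervalIntegrable (fun s : ℝ => Complex.exp (-l * (s : ℂ)) * cConst α l s)
      volume 0 t := by
    simp only [exp_mul_cConst]
    have hi : IntervalIntegrable (fun r : ℝ => Complex.exp (-l * ((r : ℝ) : ℂ)) *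
        ((r ^ (α - 1) : ℝ) : ℂ) / ((Real.Gamma α : ℝ) : ℂ)) volume 0 t := by
      simp only [mul_div_assoc]
      exact (rpow_kernel_integrable hα t).continuousOn_mul hk.continuousOn
    exact (intervalIntegral.continuousOn_primitive_interval' hi
      Set.left_mem_uIcc).intervalIntegrable
  have hcx : IntervalIntegrable (fun s : ℝ =>
      (Complex.exp (-l * (s : ℂ)) * cConst α l s) • x) volume 0 t := by
    exact ⟨hci.1.smul_const x, hci.2.smul_const x⟩
  have hlL : IntervalIntegrable (fun s : ℝ => l • Complex.exp (-l * (s : ℂ)) • Dop S l s x)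
      volume 0 t := hLi.smul l
  obtain ⟨h1, h2⟩ := integral_mem_domain D A hres ht hLi
    (g := fun s : ℝ => l • Complex.exp (-l * (s : ℂ)) • Dop S l s x -
      ((Complex.exp (-l * (s : ℂ)) * cConst α l s) • x - Complex.exp (-l * (s : ℂ)) • S s x))
    (hlL.sub (hcx.sub hSe))
    (by
      intro r hr
      obtain ⟨h1, h2⟩ := Dop_mem_and_sub hα D A S hcont hres hint l hr.1 x
      refine ⟨D.smul_mem _ h1, ?_⟩
      rw [mul_smul, ← smul_sub, ← h2, map_smul, smul_comm l, ← smul_sub, sub_sub_cancel])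
  refine ⟨h1, ?_⟩
  rw [intervalIntegral.integral_sub hlL (hcx.sub hSe),
    intervalIntegral.integral_sub hcx hSe, intervalIntegral.integral_smul,
    intervalIntegral.integral_smul_const] at h2
  change A (Lop S l t x) = l • Lop S l t x - _ at h2
  rw [h2, sub_sub_cancel, exp_smul_Dop]
  simp only [exp_mul_cConst]
  rfl

end Operators

theorem stmt_15
    {X : Type*} [NormedAddCommGroup X] [NormedSpace ℂ X] [CompleteSpace X]
    (α : ℝ) (hα : 0 < α)
    (D : Submodule ℂ X) (A : X →ₗ[ℂ] X)
    (S : ℝ → X →L[ℂ] X)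
    (hcont : ∀ x : X, ContinuousOn (fun u : ℝ => S u x) (Set.Ici (0:ℝ)))
    (hcomm : ∀ u v : ℝ, 0 ≤ u → 0 ≤ v → ∀ x : X, S u (S v x) = S v (S u x))
    (hres : ∃ μ : ℂ, ∃ R : X →L[ℂ] X, (∀ x : X, R x ∈ D) ∧
      (∀ x : X, μ • R x - A (R x) = x) ∧ (∀ x ∈ D, R (μ • x - A x) = x))
    (hdom : ∀ u : ℝ, 0 ≤ u → ∀ x ∈ D, S u x ∈ D ∧ A (S u x) = S u (A x) ∧
      S u x = (((u ^ α : ℝ) : ℂ) / ((Real.Gamma (α + 1) : ℝ) : ℂ)) • x +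
        ∫ s in (0:ℝ)..u, S s (A x))
    (hint : ∀ u : ℝ, 0 ≤ u → ∀ x : X, (∫ s in (0:ℝ)..u, S s x) ∈ D ∧
      A (∫ s in (0:ℝ)..u, S s x) =
        S u x - (((u ^ α : ℝ) : ℂ) / ((Real.Gamma (α + 1) : ℝ) : ℂ)) • x)
    (l : ℂ) (t : ℝ)
    (ht : 0 < t) (hphi : phiConst α l t ≠ 0) (n : ℕ) (hn : 1 ≤ n)
    (hcl : IsClosed (Set.range ⇑(cSop S α l t) + {y : X | (cSop S α l t ^ n) y = 0})) :
    IsClosed ((fun y => l • y - A y) '' (D : Set X) +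
      {y : X | y ∈ iterDom (D : Set X) (fun w => l • w - A w) n ∧
        (fun w => l • w - A w)^[n] y = 0}) := by
  obtain ⟨K, hK⟩ := exists_Dop_clm hcont l ht.le
  have hT : ∀ x, cSop S α l t x = cConst α l t • x - S t x := fun x => by simp [cSop]
  have hD := fun x => Dop_mem_and_sub hα D A S hcont hres hint l ht.le x
  refine isClosed_of_factor D (l • LinearMap.id - A) K (cSop S α l t) (phiConst α l t)
    (Complex.exp (-l * (t : ℂ))) hphi ?_ ?_ ?_ ?_ ?_ n hcl
  · intro x; rw [hK]; exact (hD x).1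
  · intro x; rw [hK, hT]; exact (hD x).2
  · intro x hx
    rw [hK, hT, ← (hD x).2]
    exact Dop_resolvent_comm D A S hcont hres
      (fun u hu y hy => ⟨(hdom u hu y hy).1, (hdom u hu y hy).2.1⟩) l ht.le hx
  · intro x
    rw [hT, hT, map_sub, map_smul, hK, hK, Dop_comm_S S hcont hcomm l ht.le]
  · intro x
    obtain ⟨h1, h2⟩ := Lop_mem_and_sub hα D A S hcont hres hint l ht.le x
    exact ⟨Lop S l t x, h1, by rw [hK]; exact h2⟩
end
end
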